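/- arXiv:1906.11369 — 6 statements merged into one kernel-verified Lean document; each statement's English description precedes it below -/
import Mathlib

section
/- Let P and P' be symmetric real n×n matrices, α₁, α₂ reals with 0 < α₁ ≤ α₂ and α₁ I ⪯ P ⪯ α₂ I and α₁ I ⪯ P' ⪯ α₂ I (Loewner order), let N ≥ 1 be a natural number and λ > 0 satisfy λ < (α₁/α₂)^{2/N}. If x, x' ∈ ℝⁿ satisfy x'ᵀ P' x' ≤ λ^N · xᵀ P' x and x ≠ 0, then x'ᵀ P x' < xᵀ P x. -/
open Matrix

/-- Under the conditioning bounds `α₁ I ⪯ P, P' ⪯ α₂ I` with `0 < α₁ ≤ α₂`,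
`N ≥ 1`, and `0 < λ < (α₁/α₂)^(2/N)`, if `x'ᵀ P' x' ≤ λ^N · xᵀ P' x` and `x ≠ 0`,
then `x'ᵀ P x' < xᵀ P x`. -/
theorem cross_lyapunov_decrease {n : ℕ}
    (P P' : Matrix (Fin n) (Fin n) ℝ)
    (hPsym : P.IsHermitian) (hP'sym : P'.IsHermitian)
    (α₁ α₂ : ℝ) (hα₁ : 0 < α₁) (hα : α₁ ≤ α₂)
    (hPlo : (P - α₁ • (1 : Matrix (Fin n) (Fin n) ℝ)).PosSemidef)
    (hPhi : (α₂ • (1 : Matrix (Fin n) (Fin n) ℝ) - P).PosSemidef)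
    (hP'lo : (P' - α₁ • (1 : Matrix (Fin n) (Fin n) ℝ)).PosSemidef)
    (hP'hi : (α₂ • (1 : Matrix (Fin n) (Fin n) ℝ) - P').PosSemidef)
    (N : ℕ) (hN : 1 ≤ N)
    (lam : ℝ) (hlam : 0 < lam) (hlt : lam < (α₁ / α₂) ^ ((2 : ℝ) / (N : ℝ)))
    (x x' : Fin n → ℝ)
    (hdecr : x' ⬝ᵥ P'.mulVec x' ≤ lam ^ N * (x ⬝ᵥ P'.mulVec x))
    (hx : x ≠ 0) :
    x' ⬝ᵥ P.mulVec x' < x ⬝ᵥ P.mulVec x := by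
  have hα₂ : 0 < α₂ := lt_of_lt_of_le hα₁ hα
  have lo : ∀ (Q : Matrix (Fin n) (Fin n) ℝ),
      (Q - α₁ • (1 : Matrix (Fin n) (Fin n) ℝ)).PosSemidef →
      ∀ y : Fin n → ℝ, α₁ * (y ⬝ᵥ y) ≤ y ⬝ᵥ Q.mulVec y := by
    intro Q hQ y
    have h := hQ.dotProduct_mulVec_nonneg y
    simp [Matrix.sub_mulVec, Matrix.smul_mulVec, dotProduct_sub] at h
    linarith
  have hi : ∀ (Q : Matrix (Fin n) (Fin n) ℝ),
      (α₂ • (1 : Matrix (Fin n) (Fin n) ℝ) - Q).PosSemidef →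
      ∀ y : Fin n → ℝ, y ⬝ᵥ Q.mulVec y ≤ α₂ * (y ⬝ᵥ y) := by
    intro Q hQ y
    have h := hQ.dotProduct_mulVec_nonneg y
    simp [Matrix.sub_mulVec, Matrix.smul_mulVec, dotProduct_sub] at h
    linarith
  have hs : 0 < x ⬝ᵥ x := by
    have h := dotProduct_star_self_pos_iff.mpr hx
    simpa using h
  have hL : lam ^ N < (α₁ / α₂) ^ 2 := by
    have h1 := pow_lt_pow_left₀ hlt hlam.le (n := N) (by omega)
    have hN0 : (N : ℝ) ≠ 0 := by positivity
    rw [← Real.rpow_natCast (_ ^ _) N, ← Real.rpow_mul (by positivity),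
      div_mul_cancel₀ _ hN0] at h1
    exact_mod_cast h1
  have hL2 : lam ^ N * α₂ ^ 2 < α₁ ^ 2 := by
    rwa [div_pow, lt_div_iff₀ (by positivity)] at hL
  have hLp : 0 < lam ^ N := by positivity
  have a1 := hi P hPhi x'
  have a2 := lo P' hP'lo x'
  have a3 := mul_le_mul_of_nonneg_left (hi P' hP'hi x) hLp.le
  have a4 := lo P hPlo x
  have b1 := mul_le_mul_of_nonneg_left a1 hα₁.le
  have b2 := mul_le_mul_of_nonneg_left (a2.trans (hdecr.trans a3)) hα₂.le
  have b3 := mul_lt_mul_of_pos_right hL2 hs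
  have b4 := mul_le_mul_of_nonneg_left a4 hα₁.le
  refine lt_of_mul_lt_mul_left ?_ hα₁.le
  linarith
end

section
/- (Theorem 1(i), constraint satisfaction.) Let A ∈ ℝ^{n×n}, B ∈ ℝ^{n×m}, let 0 < λ ≤ 1, and let c_1,…,c_r ∈ ℝⁿ, d_1,…,d_r ∈ ℝ^m define the constraints c_kᵀ x + d_kᵀ u ≤ 1. Let (t_i)_{i∈ℕ} be a strictly increasing sequence of natural numbers with t_0 = 0, and for each cycle i ∈ ℕ let K_i ∈ ℝ^{m×n}, let P_i be a symmetric positive definite n×n matrix, and ρ_i > 0 a real number. Let (x_t) satisfy x_{t+1} = (A + B K_i) x_t for all t with t_i ≤ t < t_{i+1}. Assume for every i: (a) (A + B K_i)ᵀ P_i (A + B K_i) ⪯ λ P_i; (b) x_{t_i}ᵀ P_i x_{t_i} ≤ ρ_i; (c) for every k ∈ {1,…,r}, ρ_i · (c_k + K_iᵀ d_k)(c_k + K_iᵀ d_k)ᵀ ⪯ P_i. Then for every t ∈ ℕ with t_i ≤ t < t_{i+1} and every k ∈ {1,…,r}, the state and input satisfy c_kᵀ x_t + d_kᵀ (K_i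 x_t) ≤ 1. -/
open Matrix

/-- Theorem 1(i), constraint satisfaction: under the SDP conditions
(a) `(A+BK_i)ᵀ P_i (A+BK_i) ⪯ λ P_i`, (b) `x_{t_i}ᵀ P_i x_{t_i} ≤ ρ_i`, and
(c) `ρ_i (c_k + K_iᵀ d_k)(c_k + K_iᵀ d_k)ᵀ ⪯ P_i` for every learning cycle `i`,
the closed-loop trajectory `x_{t+1} = (A + B K_i) x_t` on `[t_i, t_{i+1})` satisfies the
mixed state-input constraints `c_kᵀ x_t + d_kᵀ (K_i x_t) ≤ 1` throughout. -/
theorem constrained_adp_constraint_satisfaction {n m r : ℕ}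
    (A : Matrix (Fin n) (Fin n) ℝ) (B : Matrix (Fin n) (Fin m) ℝ)
    (lam : ℝ) (hlam0 : 0 < lam) (hlam1 : lam ≤ 1)
    (c : Fin r → Fin n → ℝ) (d : Fin r → Fin m → ℝ)
    (ti : ℕ → ℕ) (hti : StrictMono ti) (hti0 : ti 0 = 0)
    (K : ℕ → Matrix (Fin m) (Fin n) ℝ)
    (P : ℕ → Matrix (Fin n) (Fin n) ℝ) (hP : ∀ i : ℕ, (P i).PosDef)
    (ρ : ℕ → ℝ) (hρ : ∀ i : ℕ, 0 < ρ i)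
    (x : ℕ → Fin n → ℝ)
    (hdyn : ∀ i t : ℕ, ti i ≤ t → t < ti (i + 1) →
      x (t + 1) = (A + B * K i).mulVec (x t))
    (ha : ∀ i : ℕ,
      (lam • P i - (A + B * K i)ᵀ * P i * (A + B * K i)).PosSemidef)
    (hb : ∀ i : ℕ, x (ti i) ⬝ᵥ (P i).mulVec (x (ti i)) ≤ ρ i)
    (hc : ∀ (i : ℕ) (k : Fin r),
      (P i - ρ i • vecMulVec (c k + (K i)ᵀ.mulVec (d k))
        (c k + (K i)ᵀ.mulVec (d k))).PosSemidef) :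
    ∀ i t : ℕ, ti i ≤ t → t < ti (i + 1) → ∀ k : Fin r,
      c k ⬝ᵥ x t + d k ⬝ᵥ (K i).mulVec (x t) ≤ 1 := by
  intro i t h1 h2 k
  have hinv : ∀ t : ℕ, ti i ≤ t → t < ti (i + 1) → x t ⬝ᵥ (P i).mulVec (x t) ≤ ρ i := by
    intro t ht
    induction t, ht using Nat.le_induction with
    | base => intro _; exact hb i
    | succ t ht ih =>
      intro hlt
      have hlt' : t < ti (i + 1) := by omega
      have h0 := ih hlt'
      have hA := (ha i).dotProduct_mulVec_nonneg (x t)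
      have hp := (hP i).posSemidef.dotProduct_mulVec_nonneg (x t)
      simp only [star_trivial] at hA hp
      rw [hdyn i t ht hlt']
      rw [sub_mulVec, dotProduct_sub, smul_mulVec, dotProduct_smul, smul_eq_mul,
        ← mulVec_mulVec, ← mulVec_mulVec, dotProduct_mulVec (x t) (A + B * K i)ᵀ,
        vecMul_transpose] at hA
      nlinarith
  have hx := hinv t h1 h2
  have hC := (hc i k).dotProduct_mulVec_nonneg (x t)
  simp only [star_trivial] at hC
  have e : c k ⬝ᵥ x t + d k ⬝ᵥ (K i).mulVec (x t)
      = (c k + (K i)ᵀ.mulVec (d k)) ⬝ᵥ x t := by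
    rw [add_dotProduct, dotProduct_mulVec, mulVec_transpose]
  rw [e]
  generalize c k + (K i)ᵀ.mulVec (d k) = v at *
  have e2 : x t ⬝ᵥ (vecMulVec v v).mulVec (x t) = (v ⬝ᵥ x t) * (v ⬝ᵥ x t) := by
    rw [vecMulVec_mulVec]
    simp [dotProduct_smul, dotProduct_comm]
  rw [sub_mulVec, dotProduct_sub, smul_mulVec, dotProduct_smul, smul_eq_mul, e2] at hC
  have hr := hρ i
  have h3 : ρ i * ((v ⬝ᵥ x t) * (v ⬝ᵥ x t)) ≤ ρ i * 1 := by linarith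
  have h4 := le_of_mul_le_mul_left h3 hr
  nlinarith
end

section
/- (Theorem 1(ii), asymptotic stability.) Let A ∈ ℝ^{n×n}, B ∈ ℝ^{n×m}, let α₁, α₂ be reals with 0 < α₁ ≤ α₂, let N ≥ 1 be a natural number, and let 0 < λ < (α₁/α₂)^{2/N}. Let (t_i)_{i∈ℕ} be a strictly increasing sequence of natural numbers with t_0 = 0 and t_{i+1} − t_i ≥ N for all i, and for each i let K_i ∈ ℝ^{m×n} and let P_i be a symmetric n×n matrix with α₁ I ⪯ P_i ⪯ α₂ I and (A + B K_i)ᵀ P_i (A + B K_i) ⪯ λ P_i (Loewner order). Let (x_t) satisfy x_{t+1} = (A + B K_i) x_t for all t with t_i ≤ t < t_{i+1}. Then x_t → 0 as t → ∞. -/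
open Matrix Filter

theorem adp_real_aux (α₁ α₂ : ℝ) (hα₁ : 0 < α₁) (hα : α₁ ≤ α₂)
    (N : ℕ) (hN : 1 ≤ N)
    (lam : ℝ) (hlam0 : 0 < lam) (hlam : lam < (α₁ / α₂) ^ ((2 : ℝ) / (N : ℝ)))
    (ti : ℕ → ℕ) (hti : StrictMono ti) (hti0 : ti 0 = 0)
    (htiN : ∀ i : ℕ, N ≤ ti (i + 1) - ti i)
    (q : ℕ → ℕ → ℝ) (V : ℕ → ℝ) (hV : ∀ t, 0 ≤ V t)
    (hlo : ∀ i t, α₁ * V t ≤ q i t) (hhi : ∀ i t, q i t ≤ α₂ * V t)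
    (hq : ∀ i t : ℕ, ti i ≤ t → t < ti (i + 1) → q i (t + 1) ≤ lam * q i t) :
    Tendsto V atTop (nhds 0) := by
  have hα₂ : 0 < α₂ := lt_of_lt_of_le hα₁ hα
  have hr0 : 0 < α₁ / α₂ := div_pos hα₁ hα₂
  have hr1 : α₁ / α₂ ≤ 1 := (div_le_one hα₂).2 hα
  have hNpos : (0 : ℝ) < N := by exact_mod_cast hN
  have hlam1 : lam < 1 :=
    lt_of_lt_of_le hlam (Real.rpow_le_one hr0.le hr1 (by positivity))
  have hlamN : lam ^ N < (α₁ / α₂) ^ 2 := by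
    have h := pow_lt_pow_left₀ hlam hlam0.le (by omega : N ≠ 0)
    rw [← Real.rpow_natCast ((α₁ / α₂) ^ _), ← Real.rpow_mul hr0.le, div_mul_cancel₀ _ hNpos.ne'] at h
    simpa using h
  set c := α₂ / α₁ * lam ^ N with hc
  have hR : 0 < α₂ / α₁ := div_pos hα₂ hα₁
  have hc0 : 0 < c := by positivity
  have hc1 : c < 1 := by
    have h1 : c < α₂ / α₁ * (α₁ / α₂) ^ 2 := mul_lt_mul_of_pos_left hlamN hR
    have h2 : α₂ / α₁ * (α₁ / α₂) ^ 2 = α₁ / α₂ := by field_simp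
    linarith
  have hcyc : ∀ i s, ti i + s ≤ ti (i + 1) → q i (ti i + s) ≤ lam ^ s * q i (ti i) := by
    intro i s
    induction s with
    | zero => simp
    | succ s ih =>
      intro h
      have h1 := ih (by omega)
      have h2 := hq i (ti i + s) (by omega) (by omega)
      calc q i (ti i + (s + 1)) ≤ lam * q i (ti i + s) := h2
        _ ≤ lam * (lam ^ s * q i (ti i)) := mul_le_mul_of_nonneg_left h1 hlam0.le
        _ = _ := by ring
  have hcycV : ∀ i s, ti i + s ≤ ti (i + 1) →
      V (ti i + s) ≤ α₂ / α₁ * lam ^ s * V (ti i) := by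
    intro i s h
    have h1 := hcyc i s h
    have h2 := hlo i (ti i + s)
    have h3 := mul_le_mul_of_nonneg_left (hhi i (ti i)) (pow_pos hlam0 s).le
    have h4 : α₂ / α₁ * lam ^ s * V (ti i) = (lam ^ s * (α₂ * V (ti i))) / α₁ := by
      field_simp
    rw [h4, le_div_iff₀ hα₁]
    linarith
  have hbd : ∀ i, V (ti i) ≤ c ^ i * V 0 := by
    intro i
    induction i with
    | zero => simp [hti0]
    | succ i ih =>
      have hlt := hti (Nat.lt_succ_self i)
      have hn := htiN i
      have h1 := hcycV i (ti (i + 1) - ti i) (by omega)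
      rw [show ti i + (ti (i + 1) - ti i) = ti (i + 1) by omega] at h1
      have h2 : lam ^ (ti (i + 1) - ti i) ≤ lam ^ N :=
        pow_le_pow_of_le_one hlam0.le hlam1.le hn
      calc V (ti (i + 1)) ≤ _ := h1
        _ ≤ c * V (ti i) :=
          mul_le_mul_of_nonneg_right (mul_le_mul_of_nonneg_left h2 hR.le) (hV _)
        _ ≤ c * (c ^ i * V 0) := mul_le_mul_of_nonneg_left ih hc0.le
        _ = _ := by ring
  have hex : ∀ t, ∃ j, ti j ≤ t ∧ t < ti (j + 1) := by
    intro t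
    induction t with
    | zero => exact ⟨0, by omega, by have := hti (show 0 < 0 + 1 by omega); omega⟩
    | succ t ih =>
      obtain ⟨j, h1, h2⟩ := ih
      by_cases h : t + 1 < ti (j + 1)
      · exact ⟨j, by omega, h⟩
      · exact ⟨j + 1, by omega, by have := hti (show j + 1 < j + 1 + 1 by omega); omega⟩
  have hall : ∀ i t, ti i ≤ t → V t ≤ α₂ / α₁ * V 0 * c ^ i := by
    intro i t hit
    obtain ⟨j, h1, h2⟩ := hex t
    have hij : i ≤ j := by
      have : ti i < ti (j + 1) := by omega
      have := hti.lt_iff_lt.1 this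
      omega
    have h3 := hcycV j (t - ti j) (by omega)
    rw [show ti j + (t - ti j) = t by omega] at h3
    have h4 : lam ^ (t - ti j) ≤ 1 := pow_le_one₀ hlam0.le hlam1.le
    have h5 : c ^ j ≤ c ^ i := pow_le_pow_of_le_one hc0.le hc1.le hij
    calc V t ≤ _ := h3
      _ ≤ α₂ / α₁ * 1 * V (ti j) :=
        mul_le_mul_of_nonneg_right (mul_le_mul_of_nonneg_left h4 hR.le) (hV _)
      _ ≤ α₂ / α₁ * 1 * (c ^ j * V 0) := mul_le_mul_of_nonneg_left (hbd j) (by positivity)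
      _ ≤ α₂ / α₁ * 1 * (c ^ i * V 0) :=
        mul_le_mul_of_nonneg_left (mul_le_mul_of_nonneg_right h5 (hV 0)) (by positivity)
      _ = _ := by ring
  have hlim : Tendsto (fun i : ℕ => α₂ / α₁ * V 0 * c ^ i) atTop (nhds 0) := by
    simpa using (tendsto_pow_atTop_nhds_zero_of_lt_one hc0.le hc1).const_mul (α₂ / α₁ * V 0)
  rw [Metric.tendsto_atTop]
  intro ε hε
  obtain ⟨i, hi⟩ := (hlim.eventually (gt_mem_nhds hε)).exists
  refine ⟨ti i, fun t ht => ?_⟩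
  rw [Real.dist_eq, sub_zero, abs_of_nonneg (hV t)]
  exact lt_of_le_of_lt (hall i t ht) hi

/-- Theorem 1(ii), asymptotic stability: with learning cycles of length at
least `N`, conditioning bounds `α₁ I ⪯ P_i ⪯ α₂ I`, contraction
`(A+BK_i)ᵀ P_i (A+BK_i) ⪯ λ P_i`, and `0 < λ < (α₁/α₂)^(2/N)`, the closed-loop
trajectory `x_{t+1} = (A + B K_i) x_t` on `[t_i, t_{i+1})` converges to `0`. -/
theorem constrained_adp_asymptotic_stability {n m : ℕ}
    (A : Matrix (Fin n) (Fin n) ℝ) (B : Matrix (Fin n) (Fin m) ℝ)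
    (α₁ α₂ : ℝ) (hα₁ : 0 < α₁) (hα : α₁ ≤ α₂)
    (N : ℕ) (hN : 1 ≤ N)
    (lam : ℝ) (hlam0 : 0 < lam) (hlam : lam < (α₁ / α₂) ^ ((2 : ℝ) / (N : ℝ)))
    (ti : ℕ → ℕ) (hti : StrictMono ti) (hti0 : ti 0 = 0)
    (htiN : ∀ i : ℕ, N ≤ ti (i + 1) - ti i)
    (K : ℕ → Matrix (Fin m) (Fin n) ℝ)
    (P : ℕ → Matrix (Fin n) (Fin n) ℝ) (hPsym : ∀ i : ℕ, (P i).IsHermitian)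
    (hPlo : ∀ i : ℕ, (P i - α₁ • (1 : Matrix (Fin n) (Fin n) ℝ)).PosSemidef)
    (hPhi : ∀ i : ℕ, (α₂ • (1 : Matrix (Fin n) (Fin n) ℝ) - P i).PosSemidef)
    (hcontr : ∀ i : ℕ,
      (lam • P i - (A + B * K i)ᵀ * P i * (A + B * K i)).PosSemidef)
    (x : ℕ → EuclideanSpace ℝ (Fin n))
    (hdyn : ∀ i t : ℕ, ti i ≤ t → t < ti (i + 1) →
      x (t + 1) = (A + B * K i).mulVec (x t)) :
    Tendsto x atTop (nhds 0) := by
  have hpsd : ∀ (M : Matrix (Fin n) (Fin n) ℝ), M.PosSemidef →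
      ∀ v : Fin n → ℝ, 0 ≤ v ⬝ᵥ (M *ᵥ v) := by
    intro M hM v
    simpa using hM.dotProduct_mulVec_nonneg v
  have key := adp_real_aux α₁ α₂ hα₁ hα N hN lam hlam0 hlam ti hti hti0 htiN
    (fun i t => (x t).ofLp ⬝ᵥ (P i *ᵥ (x t).ofLp)) (fun t => (x t).ofLp ⬝ᵥ (x t).ofLp)
    (fun t => by
      simp only [dotProduct]
      exact Finset.sum_nonneg fun i _ => mul_self_nonneg _)
    (fun i t => by
      have h := hpsd _ (hPlo i) (x t).ofLp
      simp only [sub_mulVec, smul_mulVec, one_mulVec, dotProduct_sub, dotProduct_smul,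
        smul_eq_mul] at h
      linarith)
    (fun i t => by
      have h := hpsd _ (hPhi i) (x t).ofLp
      simp only [sub_mulVec, smul_mulVec, one_mulVec, dotProduct_sub, dotProduct_smul,
        smul_eq_mul] at h
      linarith)
    (fun i t h1 h2 => by
      have h := hpsd _ (hcontr i) (x t).ofLp
      have hd := hdyn i t h1 h2
      simp only [sub_mulVec, smul_mulVec, dotProduct_sub, dotProduct_smul,
        smul_eq_mul] at h
      rw [Matrix.mul_assoc, ← mulVec_mulVec, ← mulVec_mulVec, dotProduct_mulVec _ (_)ᵀ,
        vecMul_transpose, ← hd] at h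
      linarith)
  have hn : Tendsto (fun t => ‖x t‖ ^ 2) atTop (nhds 0) := by
    refine key.congr fun t => ?_
    rw [EuclideanSpace.real_norm_sq_eq]
    simp [dotProduct, sq]
  rw [tendsto_zero_iff_norm_tendsto_zero]
  have := hn.sqrt
  simpa using this
end

section
/- Let A, P, Q be real n×n matrices, B ∈ ℝ^{n×m}, R a real m×m matrix, with P symmetric positive semidefinite and R symmetric positive definite, and let K* = −(R + BᵀPB)⁻¹ BᵀPA. Then for every K ∈ ℝ^{m×n}, Q + K*ᵀRK* + (A + BK*)ᵀP(A + BK*) ⪯ Q + KᵀRK + (A + BK)ᵀP(A + BK) in the Loewner order; i.e., K* minimizes the matrix-valued one-step cost K ↦ Q + KᵀRK + (A + BK)ᵀP(A + BK) over all linear gains, and hence minimizes xᵀ(Q + KᵀRK + (A+BK)ᵀP(A+BK))x simultaneously for every x ∈ ℝⁿ. -/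
open Matrix

/-- with `P` symmetric PSD, `R` symmetric positive definite, and
`K* = −(R + BᵀPB)⁻¹ BᵀPA`, the gain `K*` minimizes the matrix-valued one-step cost
`K ↦ Q + KᵀRK + (A+BK)ᵀP(A+BK)` in the Loewner order, and hence minimizes
`xᵀ(Q + KᵀRK + (A+BK)ᵀP(A+BK))x` simultaneously for every `x`. -/
theorem policy_improvement_optimality {n m : ℕ}
    (A P Q : Matrix (Fin n) (Fin n) ℝ) (B : Matrix (Fin n) (Fin m) ℝ)
    (R : Matrix (Fin m) (Fin m) ℝ)
    (hP : P.PosSemidef) (hR : R.PosDef)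
    (Kstar : Matrix (Fin m) (Fin n) ℝ)
    (hKstar : Kstar = -((R + Bᵀ * P * B)⁻¹ * Bᵀ * P * A)) :
    ∀ K : Matrix (Fin m) (Fin n) ℝ,
      ((Q + Kᵀ * R * K + (A + B * K)ᵀ * P * (A + B * K)) -
        (Q + Kstarᵀ * R * Kstar +
          (A + B * Kstar)ᵀ * P * (A + B * Kstar))).PosSemidef ∧
      ∀ x : Fin n → ℝ,
        x ⬝ᵥ (Q + Kstarᵀ * R * Kstar +
            (A + B * Kstar)ᵀ * P * (A + B * Kstar)).mulVec x ≤
          x ⬝ᵥ (Q + Kᵀ * R * K + (A + B * K)ᵀ * P * (A + B * K)).mulVec x := by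
  intro K
  have hPt : Pᵀ = P := by simpa [Matrix.IsHermitian, conjTranspose_eq_transpose_of_trivial] using hP.1
  have hRt : Rᵀ = R := by simpa [Matrix.IsHermitian, conjTranspose_eq_transpose_of_trivial] using hR.1
  have hBPB : (Bᵀ * P * B).PosSemidef := by
    simpa [conjTranspose_eq_transpose_of_trivial] using hP.conjTranspose_mul_mul_same B
  have hM : (R + Bᵀ * P * B).PosDef := hR.add_posSemidef hBPB
  have hdet : IsUnit (R + Bᵀ * P * B).det := (Matrix.isUnit_iff_isUnit_det _).1 hM.isUnit
  have h0 : (R + Bᵀ * P * B) * Kstar = -(Bᵀ * P * A) := by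
    rw [hKstar, Matrix.mul_neg]
    congr 1
    simp only [Matrix.mul_assoc]
    rw [← Matrix.mul_assoc Bᵀ P B] 
    exact Matrix.mul_nonsing_inv_cancel_left _ _ hdet
  clear hKstar
  obtain ⟨D, rfl⟩ : ∃ D, K = Kstar + D := ⟨K - Kstar, by abel⟩
  have h1 : R * Kstar + Bᵀ * P * (A + B * Kstar) = 0 := by
    rw [Matrix.add_mul] at h0
    rw [Matrix.mul_add, ← Matrix.mul_assoc, add_left_comm, h0]
    abel
  have hA : A + B * (Kstar + D) = (A + B * Kstar) + B * D := by
    rw [Matrix.mul_add, add_assoc]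
  rw [hA]
  generalize A + B * Kstar = C at *
  have h2 : Kstarᵀ * R + Cᵀ * P * B = 0 := by
    have := congrArg Matrix.transpose h1
    simpa [Matrix.transpose_mul, hPt, hRt, Matrix.mul_assoc] using this
  have key : (Q + (Kstar + D)ᵀ * R * (Kstar + D) + (C + B * D)ᵀ * P * (C + B * D)) -
      (Q + Kstarᵀ * R * Kstar + Cᵀ * P * C) = Dᵀ * (R + Bᵀ * P * B) * D := by
    have e : (Q + (Kstar + D)ᵀ * R * (Kstar + D) + (C + B * D)ᵀ * P * (C + B * D)) -
      (Q + Kstarᵀ * R * Kstar + Cᵀ * P * C) = Dᵀ * (R + Bᵀ * P * B) * D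
        + Dᵀ * (R * Kstar + Bᵀ * P * C) + (Kstarᵀ * R + Cᵀ * P * B) * D := by
      simp only [Matrix.transpose_add, Matrix.transpose_mul, Matrix.mul_add, Matrix.add_mul,
        Matrix.mul_assoc]
      abel
    rw [e, h1, h2]
    simp
  have hps : (Dᵀ * (R + Bᵀ * P * B) * D).PosSemidef := by
    simpa only [conjTranspose_eq_transpose_of_trivial] using
      hM.posSemidef.conjTranspose_mul_mul_same D
  rw [← key] at hps
  refine ⟨hps, fun x => ?_⟩
  have := hps.dotProduct_mulVec_nonneg x
  rw [Matrix.sub_mulVec, dotProduct_sub] at this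
  simpa using this
end

section
/- Let A ∈ ℝ^{n×n}, B ∈ ℝ^{n×m}, let P be a symmetric positive semidefinite real n×n matrix, let λ ≥ 0, and let K₁, K₂ ∈ ℝ^{m×n} both satisfy the contraction constraint (A + BK_i)ᵀ P (A + BK_i) ⪯ λ P (Loewner order) for i = 1, 2. Then for every α ∈ [0,1], the convex combination K = αK₁ + (1−α)K₂ also satisfies (A + BK)ᵀ P (A + BK) ⪯ λ P. -/
open Matrix

/-- if `K₁` and `K₂` both satisfy the contraction constraint
`(A + BK)ᵀ P (A + BK) ⪯ λ P` (with `P` symmetric PSD and `λ ≥ 0`), then so does every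
convex combination `K = αK₁ + (1−α)K₂` with `α ∈ [0,1]`. -/
theorem convex_combination_preserves_contraction {n m : ℕ}
    (A : Matrix (Fin n) (Fin n) ℝ) (B : Matrix (Fin n) (Fin m) ℝ)
    (P : Matrix (Fin n) (Fin n) ℝ) (hP : P.PosSemidef)
    (lam : ℝ) (hlam : 0 ≤ lam)
    (K₁ K₂ : Matrix (Fin m) (Fin n) ℝ)
    (h₁ : (lam • P - (A + B * K₁)ᵀ * P * (A + B * K₁)).PosSemidef)
    (h₂ : (lam • P - (A + B * K₂)ᵀ * P * (A + B * K₂)).PosSemidef) :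
    ∀ α : ℝ, 0 ≤ α → α ≤ 1 →
      (lam • P - (A + B * (α • K₁ + (1 - α) • K₂))ᵀ * P *
        (A + B * (α • K₁ + (1 - α) • K₂))).PosSemidef := by
  intro α h0 h1
  have hc : A + B * (α • K₁ + (1 - α) • K₂)
      = α • (A + B * K₁) + (1 - α) • (A + B * K₂) := by
    simp only [Matrix.mul_add, Matrix.mul_smul]
    module
  rw [hc]
  generalize A + B * K₁ = M at *
  generalize A + B * K₂ = N at *
  have h3 := hP.conjTranspose_mul_mul_same (M - N)
  rw [Matrix.conjTranspose_eq_transpose_of_trivial] at h3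
  have h1' : 0 ≤ 1 - α := by linarith
  have key := ((h₁.smul h0).add (h₂.smul h1')).add (h3.smul (mul_nonneg h0 h1'))
  convert key using 1
  simp only [Matrix.transpose_add, Matrix.transpose_sub, Matrix.transpose_smul, Matrix.mul_add,
    Matrix.add_mul, Matrix.mul_sub, Matrix.sub_mul, Matrix.mul_smul, Matrix.smul_mul]
  module
end

section
/- Let A, Q be real n×n matrices, B ∈ ℝ^{n×m}, R a real m×m matrix, K ∈ ℝ^{m×n}, and let P be a symmetric positive definite real n×n matrix satisfying the Lyapunov equation (A + BK)ᵀ P (A + BK) = P − (Q + KᵀRK). Let λ be any real number with λ ≥ μ, where μ is the largest eigenvalue of I − P^{−1/2}(Q + KᵀRK)P^{−1/2}. Then (A + BK)ᵀ P (A + BK) ⪯ λ P in the Loewner order. -/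
open Matrix
open scoped MatrixOrder

theorem aux_le {n : ℕ} (M : Matrix (Fin n) (Fin n) ℝ) (hH : M.IsHermitian) (lam : ℝ)
    (h : ∀ i, hH.eigenvalues i ≤ lam) : (lam • (1 : Matrix (Fin n) (Fin n) ℝ) - M).PosSemidef := by
  have h1 : M ≤ algebraMap ℝ (Matrix (Fin n) (Fin n) ℝ) lam := by
    apply le_algebraMap_of_spectrum_le (ha := hH.isSelfAdjoint)
    intro x hx
    rw [hH.spectrum_real_eq_range_eigenvalues] at hx
    obtain ⟨i, rfl⟩ := hx
    exact h i
  rw [Matrix.le_iff, Algebra.algebraMap_eq_smul_one] at h1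
  exact h1

/-- if `P` (symmetric positive definite) satisfies the Lyapunov equation
`(A+BK)ᵀ P (A+BK) = P − (Q + KᵀRK)` and `λ ≥ μ`, where `μ` is the largest eigenvalue of
`I − P^{−1/2}(Q + KᵀRK)P^{−1/2}`, then `(A+BK)ᵀ P (A+BK) ⪯ λ P` (Loewner order). -/
theorem lqr_feasible_for_contraction {n m : ℕ}
    (A Q : Matrix (Fin n) (Fin n) ℝ) (B : Matrix (Fin n) (Fin m) ℝ)
    (R : Matrix (Fin m) (Fin m) ℝ) (K : Matrix (Fin m) (Fin n) ℝ)
    (P : Matrix (Fin n) (Fin n) ℝ) (hP : P.PosDef)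
    (hLyap : (A + B * K)ᵀ * P * (A + B * K) = P - (Q + Kᵀ * R * K))
    (hH : ((1 : Matrix (Fin n) (Fin n) ℝ) -
      (CFC.sqrt P)⁻¹ * (Q + Kᵀ * R * K) * (CFC.sqrt P)⁻¹).IsHermitian)
    (lam : ℝ) (hlam : (⨆ i : Fin n, hH.eigenvalues i) ≤ lam) :
    (lam • P - (A + B * K)ᵀ * P * (A + B * K)).PosSemidef := by
  have hM := aux_le _ hH lam
    (fun i => (le_ciSup (Set.finite_range hH.eigenvalues).bddAbove i).trans hlam)
  rw [hLyap]
  clear hlam hH hLyap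
  generalize Q + Kᵀ * R * K = W at *
  have hSS : CFC.sqrt P * CFC.sqrt P = P :=
    CFC.sqrt_mul_sqrt_self P (Matrix.nonneg_iff_posSemidef.mpr hP.posSemidef)
  have hS : (CFC.sqrt P)ᴴ = CFC.sqrt P :=
    (Matrix.nonneg_iff_posSemidef.mp (CFC.sqrt_nonneg P)).isHermitian
  generalize CFC.sqrt P = S at *
  have hu : IsUnit S.det := by
    have h := hP.det_pos
    rw [← hSS, det_mul] at h
    exact isUnit_iff_ne_zero.mpr (fun h0 => by simp [h0] at h)
  have h2 := hM.conjTranspose_mul_mul_same S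
  rw [hS] at h2
  have e : S * (lam • (1 : Matrix (Fin n) (Fin n) ℝ) - (1 - S⁻¹ * W * S⁻¹)) * S
      = lam • P - (P - W) := by
    have e1 : S * (S⁻¹ * W * S⁻¹) * S = W := by
      rw [Matrix.mul_assoc S⁻¹, Matrix.mul_nonsing_inv_cancel_left _ _ hu,
        Matrix.nonsing_inv_mul_cancel_right _ _ hu]
    simp only [Matrix.mul_sub, Matrix.sub_mul, e1, Matrix.mul_smul, Matrix.smul_mul,
      Matrix.mul_one, hSS]
  rwa [e] at h2
end
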